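/- Let λ > 0 and let f be a continuously differentiable function on the closed unit ball B^d. Then for every n ≥ 2, 1 ≤ j ≤ n/2, and 1 ≤ ν ≤ σ_{n−2j}, ⟨f, U_{j,ν}^n⟩_I = −2jλ·(1/ω_d)∫_{S^{d−1}} f(y) Y_ν^{n−2j}(y) dω(y) + 4j(n−j+(d−2)/2)·(λ/ω_d)∫_{B^d} f(y) P_{j−1,ν}^{n−2}(W_1; y) dy, where P_{j−1,ν}^{n−2}(W_1; y) = P_{j−1}^{(1, n−2j+(d−2)/2)}(2‖y‖²−1)·Y_ν^{n−2j}(y). -/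

import Mathlib

open MeasureTheory Metric MvPolynomial RealInnerProductSpace

noncomputable section

/-- Generalized binomial coefficient `C(z, k)` for real `z`. -/
def genBinom (z : ℝ) (k : ℕ) : ℝ := (∏ i ∈ Finset.range k, (z - i)) / (Nat.factorial k)

/-- The Jacobi polynomial `P_n^{(a,b)}`, normalized so that `P_n^{(a,b)}(1) = C(n+a, n)`. -/
def jacobiPoly (n : ℕ) (a b : ℝ) : Polynomial ℝ :=
  ∑ s ∈ Finset.range (n + 1),
    Polynomial.C (genBinom ((n : ℝ) + a) (n - s) * genBinom ((n : ℝ) + b) s) *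
      (Polynomial.C (2⁻¹) * (Polynomial.X - 1)) ^ s *
      (Polynomial.C (2⁻¹) * (Polynomial.X + 1)) ^ (n - s)

/-- The Jacobi polynomial as a real function. -/
def jacobiR (n : ℕ) (a b x : ℝ) : ℝ := (jacobiPoly n a b).eval x

/-- The Laplace operator on polynomials in `d` variables. -/
def mvLaplacian {d : ℕ} (p : MvPolynomial (Fin d) ℝ) : MvPolynomial (Fin d) ℝ :=
  ∑ i : Fin d, pderiv i (pderiv i p)

/-- The polynomial `‖x‖² = x₁² + ⋯ + x_d²`. -/
def sumSq (d : ℕ) : MvPolynomial (Fin d) ℝ := ∑ i : Fin d, X i ^ 2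

/-- `σ_m`, the dimension of the space of spherical harmonics of degree `m` in `d` variables. -/
def sigmaDim (d m : ℕ) : ℕ := (m + d - 1).choose (d - 1) - (m + d - 3).choose (d - 1)

/-- The surface area `ω_d = 2 π^{d/2} / Γ(d/2)` of the unit sphere `S^{d-1}`. -/
def omegaD (d : ℕ) : ℝ := 2 * Real.pi ^ ((d : ℝ) / 2) / Real.Gamma ((d : ℝ) / 2)

/-- Euclidean space `ℝ^d`. -/
abbrev Edim (d : ℕ) := EuclideanSpace ℝ (Fin d)

/-- Evaluation of a polynomial in `d` variables at a point of `ℝ^d`. -/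
def pEval {d : ℕ} (p : MvPolynomial (Fin d) ℝ) (x : Edim d) : ℝ := eval (fun i => x i) p

/-- The surface measure `dω` on the unit sphere `S^{d-1}`. -/
def sphMeasure (d : ℕ) : Measure (sphere (0 : Edim d) 1) :=
  (volume : Measure (Edim d)).toSphere

/-- The Sobolev inner product `⟨f,g⟩_I`. -/
def innerI (d : ℕ) (lam : ℝ) (f g : Edim d → ℝ) : ℝ :=
  (lam / omegaD d) * ∫ x in closedBall (0 : Edim d) 1, ⟪gradient f x, gradient g x⟫ +
    (1 / omegaD d) * ∫ y : sphere (0 : Edim d) 1, f y * g y ∂(sphMeasure d)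

/-- The Sobolev inner product `⟨f,g⟩_II`. -/
def innerII (d : ℕ) (lam : ℝ) (f g : Edim d → ℝ) : ℝ :=
  (lam / omegaD d) * ∫ x in closedBall (0 : Edim d) 1, ⟪gradient f x, gradient g x⟫ +
    f 0 * g 0

/-- The polynomials `U_{j,ν}^n`. -/
def Upoly (d : ℕ) (Y : (m : ℕ) → Fin (sigmaDim d m) → MvPolynomial (Fin d) ℝ)
    (n j : ℕ) (ν : Fin (sigmaDim d (n - 2 * j))) : MvPolynomial (Fin d) ℝ :=
  if j = 0 then Y (n - 2 * j) ν
  else (1 - sumSq d) *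
      Polynomial.aeval (2 * sumSq d - 1)
        (jacobiPoly (j - 1) 1 ((n : ℝ) - 2 * (j : ℝ) + ((d : ℝ) - 2) / 2)) *
      Y (n - 2 * j) ν



/-- Coefficients of the Jacobi polynomial with first parameter one. -/
def cJ (N : ℕ) (β : ℝ) (s : ℕ) : ℝ := ((N + 1).choose (s + 1) : ℝ) * genBinom ((N : ℝ) + β) s

lemma genBinom_succ (z : ℝ) (k : ℕ) : (k + 1 : ℝ) * genBinom z (k + 1) = (z - k) * genBinom z k := by
  unfold genBinom
  rw [Finset.prod_range_succ, Nat.factorial_succ]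
  have : (Nat.factorial k : ℝ) ≠ 0 := by positivity
  push_cast
  field_simp

lemma genBinom_nat (a k : ℕ) (h : k ≤ a) : genBinom (a : ℝ) k = (a.choose k : ℝ) := by
  induction k with
  | zero => simp [genBinom]
  | succ k ih =>
    have h1 := genBinom_succ (a : ℝ) k
    rw [ih (by omega)] at h1
    have h2 := Nat.choose_succ_right_eq a k
    have h3 : (a.choose (k + 1) : ℝ) * (k + 1) = a.choose k * ((a : ℝ) - k) := by
      have := congrArg (Nat.cast : ℕ → ℝ) h2
      push_cast [Nat.cast_sub (show k ≤ a by omega)] at this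
      exact this
    have : (k + 1 : ℝ) ≠ 0 := by positivity
    apply mul_left_cancel₀ this
    rw [h1]; linarith

lemma cJ_succ (N : ℕ) (β : ℝ) (s : ℕ) (hs : s ≤ N) :
    ((s : ℝ) + 2) * (s + 1) * cJ N β (s + 1) = ((N : ℝ) - s) * (N - s + β) * cJ N β s := by
  unfold cJ
  have h1 := genBinom_succ ((N : ℝ) + β) s
  have h2 := Nat.choose_succ_right_eq (N + 1) (s + 1)
  have h3 : ((N + 1).choose (s + 1 + 1) : ℝ) * (s + 2) = (N + 1).choose (s + 1) * ((N : ℝ) - s) := by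
    have := congrArg (Nat.cast : ℕ → ℝ) h2
    rw [show N + 1 - (s + 1) = N - s by omega] at this
    push_cast [Nat.cast_sub hs] at this
    linarith
  calc _ = (((N + 1).choose (s + 1 + 1) : ℝ) * (s + 2)) * ((s + 1 : ℝ) * genBinom ((N : ℝ) + β) (s + 1)) := by ring
    _ = _ := by rw [h3, h1]; ring

open Polynomial in
lemma jacobi_comp (N : ℕ) (β : ℝ) :
    (jacobiPoly N 1 β).comp (2 * Polynomial.X - 1) =
      ∑ s ∈ Finset.range (N + 1), Polynomial.C (cJ N β s) *
        ((Polynomial.X - 1) ^ s * Polynomial.X ^ (N - s)) := by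
  unfold jacobiPoly
  rw [Polynomial.sum_comp]
  refine Finset.sum_congr rfl fun s hs => ?_
  have hs' : s ≤ N := by simpa [Nat.lt_succ_iff] using hs
  have e1 : genBinom ((N : ℝ) + 1) (N - s) = ((N + 1).choose (s + 1) : ℝ) := by
    have := genBinom_nat (N + 1) (N - s) (by omega)
    push_cast at this
    rw [this, ← Nat.choose_symm (show s + 1 ≤ N + 1 by omega)]
    congr 2; omega
  have e2 : (Polynomial.C (2⁻¹ : ℝ)) * 2 = 1 := by
    rw [show (2 : Polynomial ℝ) = Polynomial.C 2 from rfl, ← Polynomial.C_mul]; norm_num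
  simp only [Polynomial.mul_comp, Polynomial.pow_comp, Polynomial.C_comp, Polynomial.sub_comp,
    Polynomial.add_comp, Polynomial.X_comp, Polynomial.one_comp]
  rw [e1, cJ, mul_assoc]
  congr 3
  · linear_combination (Polynomial.X - 1) * e2
  · linear_combination Polynomial.X * e2

/-- Radial profile. -/
def Qp (N : ℕ) (β : ℝ) : Polynomial ℝ :=
  (1 - Polynomial.X) * (jacobiPoly N 1 β).comp (2 * Polynomial.X - 1)

open Polynomial in
lemma Qp_eq (N : ℕ) (β : ℝ) : Qp N β = -∑ s ∈ Finset.range (N + 1), Polynomial.C (cJ N β s) *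
        ((Polynomial.X - 1) ^ (s + 1) * Polynomial.X ^ (N - s)) := by
  rw [Qp, jacobi_comp, Finset.mul_sum, ← Finset.sum_neg_distrib]
  refine Finset.sum_congr rfl fun s hs => ?_
  ring

open Polynomial in
lemma term_ode (β : ℝ) (s b : ℕ) :
    Polynomial.X * derivative (derivative (((Polynomial.X : ℝ[X]) - 1) ^ (s + 1) * Polynomial.X ^ b))
      + Polynomial.C (β + 1) * derivative ((Polynomial.X - 1) ^ (s + 1) * Polynomial.X ^ b) =
    Polynomial.C (((s : ℝ) + 1) * s) * ((Polynomial.X - 1) ^ (s - 1) * Polynomial.X ^ (b + 1)) +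
    Polynomial.C (((s : ℝ) + 1) * (2 * b + β + 1)) * ((Polynomial.X - 1) ^ s * Polynomial.X ^ b) +
    Polynomial.C ((b : ℝ) * (b + β)) * ((Polynomial.X - 1) ^ (s + 1) * Polynomial.X ^ (b - 1)) := by
  rcases s with _ | s <;> rcases b with _ | _ | b <;>
  · simp [derivative_mul, derivative_pow, show (Polynomial.C (2 : ℝ)) = 2 from rfl]
    try ring

open Polynomial in
lemma Qp_ode (N : ℕ) (β : ℝ) :
    Polynomial.X * derivative (derivative (Qp N β)) + Polynomial.C (β + 1) * derivative (Qp N β) =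
      -Polynomial.C (((N : ℝ) + 1) * (N + 1 + β)) * (jacobiPoly N 1 β).comp (2 * Polynomial.X - 1) := by
  rw [Qp_eq, jacobi_comp]
  set e : ℕ → ℝ[X] := fun s => (Polynomial.X - 1) ^ s * Polynomial.X ^ (N - s) with he
  have key : ∑ s ∈ Finset.range (N + 1), Polynomial.C (cJ N β s) *
      (Polynomial.C (((s : ℝ) + 1) * s) * ((Polynomial.X - 1) ^ (s - 1) * Polynomial.X ^ (N - s + 1)) +
    Polynomial.C (((s : ℝ) + 1) * (2 * (N - s : ℕ) + β + 1)) * ((Polynomial.X - 1) ^ s * Polynomial.X ^ (N - s)) +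
    Polynomial.C (((N - s : ℕ) : ℝ) * ((N - s : ℕ) + β)) * ((Polynomial.X - 1) ^ (s + 1) * Polynomial.X ^ (N - s - 1)))
     = Polynomial.C (((N : ℝ) + 1) * (N + 1 + β)) * ∑ s ∈ Finset.range (N + 1), Polynomial.C (cJ N β s) * e s := by
    have A : ∑ s ∈ Finset.range (N + 1), Polynomial.C (cJ N β s) *
      (Polynomial.C (((s : ℝ) + 1) * s) * ((Polynomial.X - 1) ^ (s - 1) * Polynomial.X ^ (N - s + 1))) =
      ∑ s ∈ Finset.range (N + 1), Polynomial.C (((N : ℝ) - s) * (N - s + β) * cJ N β s) * e s := by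
      rw [Finset.sum_range_succ', Finset.sum_range_succ]
      simp only [Nat.cast_zero, mul_zero, sub_self, zero_mul, map_zero, add_zero]
      refine Finset.sum_congr rfl fun s hs => ?_
      have hs' : s < N := by simpa using hs
      rw [← cJ_succ N β s hs'.le, he, ← mul_assoc, ← Polynomial.C_mul]
      simp only [Nat.add_sub_cancel]
      congr 2
      · push_cast; ring_nf
      · congr 2; omega
    have B : ∑ s ∈ Finset.range (N + 1), Polynomial.C (cJ N β s) *
      (Polynomial.C (((N - s : ℕ) : ℝ) * ((N - s : ℕ) + β)) * ((Polynomial.X - 1) ^ (s + 1) * Polynomial.X ^ (N - s - 1))) =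
      ∑ s ∈ Finset.range (N + 1), Polynomial.C (((s : ℝ) + 1) * s * cJ N β s) * e s := by
      rw [Finset.sum_range_succ, Finset.sum_range_succ']
      simp only [Nat.cast_zero, mul_zero, tsub_self, zero_mul, map_zero, add_zero]
      refine Finset.sum_congr rfl fun s hs => ?_
      have hs' : s < N := by simpa using hs
      have h := cJ_succ N β s hs'.le
      rw [he, ← mul_assoc, ← Polynomial.C_mul]
      push_cast [Nat.cast_sub hs'.le]
      congr 2
      linarith
    rw [Finset.sum_congr rfl fun s _ => mul_add _ _ _, Finset.sum_add_distrib, B,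
      Finset.sum_congr rfl fun s _ => mul_add _ _ _, Finset.sum_add_distrib, A, Finset.mul_sum,
      ← Finset.sum_add_distrib, ← Finset.sum_add_distrib]
    refine Finset.sum_congr rfl fun s hs => ?_
    have hs' : s ≤ N := by simpa [Nat.lt_succ_iff] using hs
    change _ + Polynomial.C (cJ N β s) * (_ * e s) + _ = _
    have e1 : ((N - s : ℕ) : ℝ) = N - s := Nat.cast_sub hs'
    rw [e1]
    simp only [← mul_assoc, ← Polynomial.C_mul, ← add_mul, ← Polynomial.C_add]
    congr 2
    ring
  simp only [derivative_neg, derivative_sum, derivative_C_mul, mul_neg, neg_mul]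
  rw [← key, ← neg_add, Finset.mul_sum, Finset.mul_sum, ← Finset.sum_add_distrib]
  congr 1
  refine Finset.sum_congr rfl fun s hs => ?_
  rw [← term_ode]; ring

open Polynomial in
lemma Qp_eval_one (N : ℕ) (β : ℝ) : (Qp N β).eval 1 = 0 := by simp [Qp]

open Polynomial in
lemma Qp_deriv_eval_one (N : ℕ) (β : ℝ) : (derivative (Qp N β)).eval 1 = -((N : ℝ) + 1) := by
  rw [Qp, jacobi_comp]
  simp [derivative_mul, eval_finsetSum, Finset.sum_range_succ', cJ, genBinom]

lemma pderiv_sumSq (d : ℕ) (i : Fin d) : pderiv i (sumSq d) = 2 * X i := by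
  classical
  unfold sumSq
  simp only [map_sum, Derivation.leibniz_pow, pderiv_X, Pi.single_apply]
  simp

lemma pderiv_aeval (d : ℕ) (i : Fin d) (q : Polynomial ℝ) :
    pderiv i (Polynomial.aeval (sumSq d) q) =
      2 * X i * Polynomial.aeval (sumSq d) (Polynomial.derivative q) := by
  rw [Derivation.map_aeval, pderiv_sumSq, smul_eq_mul]; ring

lemma pderiv_QY (d : ℕ) (i : Fin d) (q : Polynomial ℝ) (Y : MvPolynomial (Fin d) ℝ) :
    pderiv i (Polynomial.aeval (sumSq d) q * Y) =
      2 * X i * Polynomial.aeval (sumSq d) (Polynomial.derivative q) * Y +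
      Polynomial.aeval (sumSq d) q * pderiv i Y := by
  rw [Derivation.leibniz, pderiv_aeval]; simp only [smul_eq_mul]; ring

lemma euler_QY (d m : ℕ) (q : Polynomial ℝ) (Y : MvPolynomial (Fin d) ℝ)
    (hY : Y.IsHomogeneous m) :
    ∑ i, X i * pderiv i (Polynomial.aeval (sumSq d) q * Y) =
      2 * sumSq d * Polynomial.aeval (sumSq d) (Polynomial.derivative q) * Y +
      Polynomial.aeval (sumSq d) q * (m * Y) := by
  have h := hY.sum_X_mul_pderiv
  rw [nsmul_eq_mul] at h
  rw [← h, sumSq, Finset.mul_sum, Finset.mul_sum, Finset.sum_mul, Finset.sum_mul,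
    ← Finset.sum_add_distrib, ← sumSq]
  refine Finset.sum_congr rfl fun i _ => ?_
  rw [pderiv_QY]; ring

lemma lap_QY (d m : ℕ) (q : Polynomial ℝ) (Y : MvPolynomial (Fin d) ℝ)
    (hY : Y.IsHomogeneous m) (hH : mvLaplacian Y = 0) :
    mvLaplacian (Polynomial.aeval (sumSq d) q * Y) =
      (4 * sumSq d * Polynomial.aeval (sumSq d) (Polynomial.derivative (Polynomial.derivative q)) +
        (2 * d + 4 * m) * Polynomial.aeval (sumSq d) (Polynomial.derivative q)) * Y := by
  have h := hY.sum_X_mul_pderiv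
  rw [nsmul_eq_mul] at h
  have e : ∀ i : Fin d, pderiv i (pderiv i (Polynomial.aeval (sumSq d) q * Y)) =
      4 * Polynomial.aeval (sumSq d) (Polynomial.derivative (Polynomial.derivative q)) * Y * X i ^ 2
      + 4 * Polynomial.aeval (sumSq d) (Polynomial.derivative q) * (X i * pderiv i Y)
      + Polynomial.aeval (sumSq d) q * pderiv i (pderiv i Y)
      + 2 * Polynomial.aeval (sumSq d) (Polynomial.derivative q) * Y := by
    intro i
    rw [pderiv_QY, map_add, show 2 * X i * Polynomial.aeval (sumSq d) (Polynomial.derivative q) * Y = Polynomial.aeval (sumSq d) (Polynomial.derivative q) * (2 * X i * Y) by ring, pderiv_QY, pderiv_QY, Derivation.leibniz, Derivation.leibniz]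
    have : pderiv i (2 : MvPolynomial (Fin d) ℝ) = 0 := by rw [show (2 : MvPolynomial (Fin d) ℝ) = C 2 from rfl, pderiv_C]
    rw [this, pderiv_X_self]
    simp only [smul_eq_mul]
    ring
  rw [mvLaplacian, Finset.sum_congr rfl fun i _ => e i]
  simp only [Finset.sum_add_distrib, ← Finset.mul_sum]
  rw [h, ← sumSq, ← mvLaplacian, hH]
  simp
  ring

lemma Upoly_eq (d : ℕ) (Y : (m : ℕ) → Fin (sigmaDim d m) → MvPolynomial (Fin d) ℝ)
    (n j : ℕ) (hj : 1 ≤ j) (ν : Fin (sigmaDim d (n - 2 * j))) :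
    Upoly d Y n j ν = Polynomial.aeval (sumSq d)
      (Qp (j - 1) ((n : ℝ) - 2 * (j : ℝ) + ((d : ℝ) - 2) / 2)) * Y (n - 2 * j) ν := by
  rw [Upoly, if_neg (by omega), Qp, map_mul, Polynomial.aeval_comp]
  simp [show (2 : Polynomial ℝ) = Polynomial.C 2 from rfl]
  left; left; congr 2

lemma pEval_sumSq {d : ℕ} (x : Edim d) : pEval (sumSq d) x = ‖x‖ ^ 2 := by
  rw [EuclideanSpace.norm_sq_eq]; simp [pEval, sumSq]

lemma pEval_aeval {d : ℕ} (q : Polynomial ℝ) (x : Edim d) :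
    pEval (Polynomial.aeval (sumSq d) q) x = q.eval (‖x‖ ^ 2) := by
  rw [← pEval_sumSq, pEval, pEval]
  exact Polynomial.hom_eval₂ .. |>.trans (by simp [Polynomial.eval, Polynomial.eval₂_eq_sum])

lemma pEval_mul {d : ℕ} (p q : MvPolynomial (Fin d) ℝ) (x : Edim d) :
    pEval (p * q) x = pEval p x * pEval q x := by simp [pEval]

lemma pEval_euler_U (d : ℕ) (Y : (m : ℕ) → Fin (sigmaDim d m) → MvPolynomial (Fin d) ℝ)
    (hYhom : ∀ m ν, (Y m ν).IsHomogeneous m)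
    (n j : ℕ) (hj : 1 ≤ j) (ν : Fin (sigmaDim d (n - 2 * j))) (x : Edim d) (hx : ‖x‖ = 1) :
    pEval (∑ i, X i * pderiv i (Upoly d Y n j ν)) x = -2 * j * pEval (Y (n - 2 * j) ν) x := by
  rw [Upoly_eq d Y n j hj, euler_QY d _ _ _ (hYhom _ _)]
  have h1 := pEval_sumSq x
  have h2 := fun q => pEval_aeval q x
  unfold pEval at *
  simp only [map_add, map_mul, h1, h2, hx, one_pow, Qp_eval_one, Qp_deriv_eval_one]
  push_cast [Nat.cast_sub hj]
  simp

lemma pEval_U_sphere (d : ℕ) (Y : (m : ℕ) → Fin (sigmaDim d m) → MvPolynomial (Fin d) ℝ)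
    (n j : ℕ) (hj : 1 ≤ j) (ν : Fin (sigmaDim d (n - 2 * j))) (x : Edim d) (hx : ‖x‖ = 1) :
    pEval (Upoly d Y n j ν) x = 0 := by
  rw [Upoly_eq d Y n j hj, pEval_mul, pEval_aeval, hx]
  simp [Qp_eval_one]

lemma pEval_lap_U (d : ℕ) (Y : (m : ℕ) → Fin (sigmaDim d m) → MvPolynomial (Fin d) ℝ)
    (hYhom : ∀ m ν, (Y m ν).IsHomogeneous m) (hYharm : ∀ m ν, mvLaplacian (Y m ν) = 0)
    (n j : ℕ) (hj : 1 ≤ j) (hjn : 2 * j ≤ n) (ν : Fin (sigmaDim d (n - 2 * j))) (x : Edim d) :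
    pEval (mvLaplacian (Upoly d Y n j ν)) x =
      -(4 * (j : ℝ) * ((n : ℝ) - (j : ℝ) + ((d : ℝ) - 2) / 2)) *
        (jacobiR (j - 1) 1 ((n : ℝ) - 2 * (j : ℝ) + ((d : ℝ) - 2) / 2)
                (2 * ‖x‖ ^ 2 - 1) * pEval (Y (n - 2 * j) ν) x) := by
  rw [Upoly_eq d Y n j hj, lap_QY d _ _ _ (hYhom _ _) (hYharm _ _)]
  have h1 := pEval_sumSq x
  have h2 := fun q => pEval_aeval q x
  set β := ((n : ℝ) - 2 * (j : ℝ) + ((d : ℝ) - 2) / 2) with hβ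
  have h3 := congrArg (Polynomial.eval (‖x‖ ^ 2)) (Qp_ode (j - 1) β)
  unfold pEval at *
  simp only [map_add, map_mul, h1, h2]
  simp only [Polynomial.eval_add, Polynomial.eval_mul, Polynomial.eval_X, Polynomial.eval_C,
    Polynomial.eval_neg, Polynomial.eval_comp, Polynomial.eval_sub, Polynomial.eval_one,
    Polynomial.eval_ofNat] at h3
  rw [jacobiR]
  push_cast [Nat.cast_sub hj] at h3
  have e4 : (eval fun i => x i) (4 : MvPolynomial (Fin d) ℝ) = 4 := map_ofNat _ 4
  have e2 : (eval fun i => x i) (2 : MvPolynomial (Fin d) ℝ) = 2 := map_ofNat _ 2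
  rw [e4, e2, map_natCast, map_natCast, Nat.cast_sub hjn]
  push_cast
  have hn : (n : ℝ) = β + 2 * j - (d - 2) / 2 := by rw [hβ]; ring
  rw [hn]
  linear_combination 4 * (eval fun i => x i) (Y (n - 2 * j) ν) * h3

/-- Differential of a polynomial function. -/
def dP {d : ℕ} (p : MvPolynomial (Fin d) ℝ) (x : Edim d) : Edim d →L[ℝ] ℝ :=
  ∑ i, pEval (pderiv i p) x • (EuclideanSpace.proj i : Edim d →L[ℝ] ℝ)

lemma hasFDerivAt_pEval {d : ℕ} (p : MvPolynomial (Fin d) ℝ) (x : Edim d) :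
    HasFDerivAt (pEval p) (dP p x) x := by
  classical
  induction p using MvPolynomial.induction_on with
  | C a =>
    have : pEval (C a : MvPolynomial (Fin d) ℝ) = fun _ : Edim d => a := by
      funext y; simp [pEval]
    rw [this]
    convert hasFDerivAt_const a x
    simp [dP, pEval]
  | add p q hp hq =>
    have : pEval (p + q) = fun y : Edim d => pEval p y + pEval q y := by
      funext y; simp [pEval]
    rw [this]
    have e : dP (p + q) x = dP p x + dP q x := by
      simp [dP, pEval, add_smul, Finset.sum_add_distrib]
    rw [e]
    exact hp.add hq
  | mul_X p i hp =>
    have : pEval (p * X i) = fun y : Edim d => pEval p y * y i := by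
      funext y; simp [pEval]
    rw [this]
    have h2 : HasFDerivAt (fun y : Edim d => y i) (EuclideanSpace.proj i : Edim d →L[ℝ] ℝ) x :=
      (EuclideanSpace.proj i : Edim d →L[ℝ] ℝ).hasFDerivAt
    have e : dP (p * X i) x = pEval p x • (EuclideanSpace.proj i : Edim d →L[ℝ] ℝ) + x i • dP p x := by
      ext v
      simp only [dP, pEval, Derivation.leibniz, smul_eq_mul, map_add, map_mul, eval_X,
        pderiv_X, Pi.single_apply, add_apply, smul_apply,
        sum_apply, PiLp.proj_apply, add_mul, Finset.sum_add_distrib,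
        Finset.mul_sum]
      congr 1
      · simp [apply_ite]
      · refine Finset.sum_congr rfl fun j _ => by ring
    rw [e]
    exact hp.mul h2

lemma continuous_pEval {d : ℕ} (p : MvPolynomial (Fin d) ℝ) : Continuous (pEval p (d := d)) :=
  continuous_iff_continuousAt.2 fun x => (hasFDerivAt_pEval p x).continuousAt

lemma dP_single {d : ℕ} (p : MvPolynomial (Fin d) ℝ) (x : Edim d) (i : Fin d) :
    dP p x (EuclideanSpace.single i 1) = pEval (pderiv i p) x := by
  simp [dP]

lemma continuous_dP {d : ℕ} (p : MvPolynomial (Fin d) ℝ) : Continuous (dP p (d := d)) := by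
  unfold dP
  exact continuous_finsetSum _ fun i _ => (continuous_pEval _).smul continuous_const

lemma hasFDerivAt_cut {d : ℕ} (c : MvPolynomial (Fin d) ℝ)
    (hc : ∀ x : Edim d, ‖x‖ = 1 → pEval c x = 0)
    (f : Edim d → ℝ) (hf : ContDiffOn ℝ 1 f (closedBall (0 : Edim d) 1)) (x : Edim d) :
    HasFDerivAt ((closedBall (0 : Edim d) 1).indicator fun x => pEval c x ^ 2 * f x)
      ((closedBall (0 : Edim d) 1).indicator (fun x => pEval c x ^ 2 •
        fderivWithin ℝ f (closedBall (0 : Edim d) 1) x + (2 * pEval c x * f x) • dP c x) x) x := by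
  rcases lt_trichotomy ‖x‖ 1 with h | h | h
  · have hx : x ∈ ball (0 : Edim d) 1 := by simpa using h
    have hB : closedBall (0 : Edim d) 1 ∈ nhds x :=
      Filter.mem_of_superset (isOpen_ball.mem_nhds hx) ball_subset_closedBall
    rw [Set.indicator_of_mem (ball_subset_closedBall hx)]
    have hfd : HasFDerivAt f (fderivWithin ℝ f (closedBall (0 : Edim d) 1) x) x :=
      ((hf.differentiableOn one_ne_zero x (ball_subset_closedBall hx)).hasFDerivWithinAt).hasFDerivAt hB
    have hcd := hasFDerivAt_pEval c x
    have h1 := (hcd.pow 2).mul hfd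
    refine HasFDerivAt.congr_of_eventuallyEq ?_ (f := fun x => pEval c x ^ 2 * f x) ?_
    · refine h1.congr_fderiv ?_
      ext v
      simp
      ring
    · filter_upwards [hB] with y hy
      rw [Set.indicator_of_mem hy]
  · have hx : x ∈ closedBall (0 : Edim d) 1 := by simp [h]
    rw [Set.indicator_of_mem hx, hc x h]
    obtain ⟨M, hM⟩ := (isCompact_closedBall (0 : Edim d) 1).exists_bound_of_continuousOn
      hf.continuousOn
    have hcd := hasFDerivAt_pEval c x
    have hO := hcd.isBigO_sub
    rw [hc x h] at hO
    simp only [sub_zero] at hO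
    have ho : (fun y => (closedBall (0 : Edim d) 1).indicator (fun y => pEval c y * f y) y)
        =o[nhds x] (fun _ => (1 : ℝ)) := by
      rw [Asymptotics.isLittleO_one_iff]
      have h0 : Filter.Tendsto (fun y => |pEval c y| * M) (nhds x) (nhds 0) := by
        have := ((continuous_pEval c).abs.mul_const M).tendsto x
        simpa [hc x h] using this
      refine squeeze_zero_norm (fun y => ?_) h0
      have hM0 : 0 ≤ M := (norm_nonneg _).trans (hM x hx)
      by_cases hy : y ∈ closedBall (0 : Edim d) 1
      · rw [Set.indicator_of_mem hy, norm_mul]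
        exact mul_le_mul_of_nonneg_left (hM y hy) (abs_nonneg _)
      · rw [Set.indicator_of_notMem hy]; simp; positivity
    have hh := hO.norm_right.mul_isLittleO ho
    rw [hasFDerivAt_iff_isLittleO]
    have e : (fun y => pEval c y * (closedBall (0 : Edim d) 1).indicator (fun y => pEval c y * f y) y)
       = (fun y => (closedBall (0 : Edim d) 1).indicator (fun x => pEval c x ^ 2 * f x) y) := by
      funext y
      by_cases hy : y ∈ closedBall (0 : Edim d) 1
      · rw [Set.indicator_of_mem hy, Set.indicator_of_mem hy]; ring
      · rw [Set.indicator_of_notMem hy, Set.indicator_of_notMem hy]; ring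
    rw [e] at hh
    rw [Set.indicator_of_mem hx, hc x h]
    have hh' := hh.norm_right
    simp only [mul_one, norm_norm] at hh'
    simpa using hh'
  · have hx : x ∈ (closedBall (0 : Edim d) 1)ᶜ := by simpa using h
    rw [Set.indicator_of_notMem hx]
    refine (hasFDerivAt_const (0 : ℝ) x).congr_of_eventuallyEq ?_
    filter_upwards [isClosed_closedBall.isOpen_compl.mem_nhds hx] with y hy
    rw [Set.indicator_of_notMem hy]

lemma continuousOn_fW {d : ℕ} (f : Edim d → ℝ) (hf : ContDiffOn ℝ 1 f (closedBall (0 : Edim d) 1)) :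
    ContinuousOn (fderivWithin ℝ f (closedBall (0 : Edim d) 1)) (closedBall (0 : Edim d) 1) := by
  refine hf.continuousOn_fderivWithin ?_ le_rfl
  refine uniqueDiffOn_convex (convex_closedBall _ _) ⟨0, ?_⟩
  exact mem_interior_iff_mem_nhds.2 (closedBall_mem_nhds _ one_pos)

lemma ibp {d : ℕ} (c : MvPolynomial (Fin d) ℝ)
    (hc : ∀ x : Edim d, ‖x‖ = 1 → pEval c x = 0)
    (f : Edim d → ℝ) (hf : ContDiffOn ℝ 1 f (closedBall (0 : Edim d) 1))
    (g : MvPolynomial (Fin d) ℝ) (i : Fin d) :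
    ∫ x in closedBall (0 : Edim d) 1, pEval c x ^ 2 * f x * pEval (pderiv i g) x =
      - ∫ x in closedBall (0 : Edim d) 1, (pEval c x ^ 2 *
        fderivWithin ℝ f (closedBall (0 : Edim d) 1) x (EuclideanSpace.single i 1) +
          2 * pEval c x * f x * pEval (pderiv i c) x) * pEval g x := by
  set B := closedBall (0 : Edim d) 1 with hB
  have hBm : MeasurableSet B := measurableSet_closedBall
  have hBc : IsCompact B := isCompact_closedBall _ _
  have cc := (continuous_pEval c).continuousOn (s := B)
  have cci := (continuous_pEval (pderiv i c)).continuousOn (s := B)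
  have cg := (continuous_pEval g).continuousOn (s := B)
  have cgi := (continuous_pEval (pderiv i g)).continuousOn (s := B)
  have cf := hf.continuousOn
  have cF : ContinuousOn (fun x => fderivWithin ℝ f B x (EuclideanSpace.single i 1)) B :=
    (continuousOn_fW f hf).clm_apply continuousOn_const
  have e1 : (fun x => B.indicator (fun x => pEval c x ^ 2 * f x) x * dP g x (EuclideanSpace.single i 1))
      = B.indicator (fun x => pEval c x ^ 2 * f x * pEval (pderiv i g) x) := by
    funext x
    by_cases hx : x ∈ B <;> simp [hx, dP_single]
  have e2 : (fun x => (B.indicator (fun x => pEval c x ^ 2 •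
        fderivWithin ℝ f B x + (2 * pEval c x * f x) • dP c x) x) (EuclideanSpace.single i 1) * pEval g x)
      = B.indicator (fun x => (pEval c x ^ 2 *
        fderivWithin ℝ f B x (EuclideanSpace.single i 1) +
          2 * pEval c x * f x * pEval (pderiv i c) x) * pEval g x) := by
    funext x
    by_cases hx : x ∈ B <;> simp [hx, dP_single]
  have e3 : (fun x => B.indicator (fun x => pEval c x ^ 2 * f x) x * pEval g x)
      = B.indicator (fun x => pEval c x ^ 2 * f x * pEval g x) := by
    funext x
    by_cases hx : x ∈ B <;> simp [hx]
  have key := integral_bilinear_hasFDerivAt_right_eq_neg_left_of_integrable (μ := volume)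
    (B := ContinuousLinearMap.mul ℝ ℝ) (v := (EuclideanSpace.single i 1 : Edim d))
    (f := B.indicator fun x => pEval c x ^ 2 * f x)
    (f' := fun x => B.indicator (fun x => pEval c x ^ 2 •
        fderivWithin ℝ f B x + (2 * pEval c x * f x) • dP c x) x)
    (g := pEval g) (g' := dP g) ?_ ?_ ?_ (fun x _ => hasFDerivAt_cut c hc f hf x)
    (fun x _ => hasFDerivAt_pEval g x)
  · simp only [ContinuousLinearMap.mul_apply'] at key
    rw [e1, e2, integral_indicator hBm, integral_indicator hBm] at key
    exact key
  · simp only [ContinuousLinearMap.mul_apply']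
    rw [e2, integrable_indicator_iff hBm]
    exact ContinuousOn.integrableOn_compact hBc (by fun_prop)
  · simp only [ContinuousLinearMap.mul_apply']
    rw [e1, integrable_indicator_iff hBm]
    exact ContinuousOn.integrableOn_compact hBc (by fun_prop)
  · simp only [ContinuousLinearMap.mul_apply']
    rw [e3, integrable_indicator_iff hBm]
    exact ContinuousOn.integrableOn_compact hBc (by fun_prop)

lemma integral_volumeIoiPow (n : ℕ) (G : ℝ → ℝ) :
    ∫ x : Set.Ioi (0 : ℝ), G x ∂(Measure.volumeIoiPow n) = ∫ r in Set.Ioi (0 : ℝ), r ^ n * G r := by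
  simp only [Measure.volumeIoiPow, ENNReal.ofReal]
  rw [integral_withDensity_eq_integral_smul,
    integral_subtype_comap measurableSet_Ioi fun a ↦ Real.toNNReal (a ^ n) • G a,
    setIntegral_congr_fun measurableSet_Ioi fun x hx ↦ ?_]
  · rw [NNReal.smul_def, Real.coe_toNNReal _ (pow_nonneg hx.out.le _), smul_eq_mul]
  · exact (measurable_subtype_coe.pow_const _).real_toNNReal

lemma integral_polar {d : ℕ} (hd : 2 ≤ d) (h : Edim d → ℝ) (hh : Integrable h) :
    ∫ x, h x = ∫ r in Set.Ioi (0 : ℝ), r ^ (d - 1) *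
      ∫ y : sphere (0 : Edim d) 1, h (r • (y : Edim d)) ∂(sphMeasure d) := by
  have : Nonempty (Fin d) := ⟨⟨0, by omega⟩⟩
  have hdim : Module.finrank ℝ (Edim d) = d := by simp
  have mp := (volume : Measure (Edim d)).measurePreserving_homeomorphUnitSphereProd
  have me := (homeomorphUnitSphereProd (Edim d)).measurableEmbedding
  have e0 : ∀ x : ({(0)}ᶜ : Set (Edim d)), h ((homeomorphUnitSphereProd (Edim d) x).2.1 •
      ((homeomorphUnitSphereProd (Edim d) x).1 : Edim d)) = h x := by
    intro x
    rw [← homeomorphUnitSphereProd_symm_apply_coe, Homeomorph.symm_apply_apply]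
  have hint : Integrable (fun z : sphere (0 : Edim d) 1 × Set.Ioi (0 : ℝ) => h (z.2.1 • (z.1 : Edim d)))
      ((sphMeasure d).prod (Measure.volumeIoiPow (d - 1))) := by
    have := (mp.integrable_comp_emb me (g := fun z => h (z.2.1 • (z.1 : Edim d)))).1 (by
      have : ((fun z : sphere (0 : Edim d) 1 × Set.Ioi (0 : ℝ) => h (z.2.1 • (z.1 : Edim d))) ∘
        homeomorphUnitSphereProd (Edim d)) = h ∘ Subtype.val := funext e0
      rw [this, ← integrableOn_iff_comap_subtypeVal (measurableSet_singleton _).compl]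
      exact hh.integrableOn)
    rw [hdim] at this
    exact this
  have step : ∫ x, h x = ∫ z, h (z.2.1 • (z.1 : Edim d))
      ∂((sphMeasure d).prod (Measure.volumeIoiPow (d - 1))) := by
    have h1 := mp.integral_comp me (fun z => h (z.2.1 • (z.1 : Edim d)))
    rw [hdim] at h1
    rw [sphMeasure, ← h1]
    simp only [e0]
    rw [integral_subtype_comap (measurableSet_singleton _).compl fun x ↦ h x,
        restrict_compl_singleton]
  rw [step]
  have : IsFiniteMeasure (sphMeasure d) := by unfold sphMeasure; infer_instance
  rw [integral_prod_symm _ hint]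
  exact integral_volumeIoiPow (d - 1)
    (fun r => ∫ y : sphere (0 : Edim d) 1, h (r • (y : Edim d)) ∂(sphMeasure d))

/-- The peak kernel. -/
def pk (k : ℕ) (r : ℝ) : ℝ := 4 * ((k : ℝ) + 1) * r ^ (2 * k + 1) * (1 - r ^ (2 * k + 2))

lemma pk_int (k : ℕ) : ∫ r in Set.Ioc (0 : ℝ) 1, pk k r = 1 := by
  rw [← intervalIntegral.integral_of_le zero_le_one]
  have h : ∀ x ∈ Set.uIcc (0 : ℝ) 1, HasDerivAt (fun r : ℝ => -(1 - r ^ (2 * k + 2)) ^ 2) (pk k x) x := by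
    intro x _
    have := (((hasDerivAt_pow (2 * k + 2) x).const_sub 1).pow 2).neg
    refine this.congr_deriv ?_
    simp [pk]; ring
  rw [intervalIntegral.integral_eq_sub_of_hasDerivAt h]
  · simp
  · apply Continuous.intervalIntegrable; unfold pk; fun_prop

lemma pk_unif (u : Set ℝ) (hu : IsOpen u) (h1 : (1 : ℝ) ∈ u) :
    TendstoUniformlyOn pk 0 Filter.atTop (Set.Ioc 0 1 \ u) := by
  obtain ⟨ε, hε, hb⟩ := Metric.isOpen_iff.1 hu 1 h1
  set ρ := max (1 - ε) 0 with hρ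
  have hρ0 : 0 ≤ ρ := le_max_right _ _
  have hρ1 : ρ < 1 := max_lt (by linarith) one_pos
  have hlim : Filter.Tendsto (fun k : ℕ => 4 * (((k + 1 : ℕ) : ℝ) * ρ ^ (k + 1))) Filter.atTop (nhds 0) := by
    have := ((tendsto_self_mul_const_pow_of_lt_one hρ0 hρ1).comp (Filter.tendsto_add_atTop_nat 1)).const_mul 4
    simpa using this
  rw [Metric.tendstoUniformlyOn_iff]
  intro δ hδ
  filter_upwards [hlim.eventually (gt_mem_nhds hδ)] with k hk r hr
  have hrρ : r ≤ ρ := by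
    by_contra hcon
    push Not at hcon
    have : 1 - ε < r := lt_of_le_of_lt (le_max_left _ _) hcon
    exact hr.2 (hb (by rw [Metric.mem_ball, Real.dist_eq, abs_lt]; constructor <;> linarith [hr.1.2]))
  have hr0 : 0 ≤ r := hr.1.1.le
  have hp : r ^ (2 * k + 2) ≤ 1 := pow_le_one₀ hr0 hr.1.2
  have hp0 : 0 ≤ r ^ (2 * k + 2) := by positivity
  have hnn : 0 ≤ pk k r := by unfold pk; have : 0 ≤ 1 - r ^ (2 * k + 2) := by linarith
                              positivity
  simp only [Pi.zero_apply, dist_zero_left, Real.norm_eq_abs, abs_of_nonneg hnn]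
  refine lt_of_le_of_lt ?_ hk
  calc pk k r ≤ 4 * ((k : ℝ) + 1) * r ^ (2 * k + 1) := by
        unfold pk; exact mul_le_of_le_one_right (by positivity) (by linarith)
    _ ≤ 4 * ((k : ℝ) + 1) * ρ ^ (2 * k + 1) := by gcongr
    _ ≤ 4 * ((k : ℝ) + 1) * ρ ^ (k + 1) := by
        have := pow_le_pow_of_le_one hρ0 hρ1.le (show k + 1 ≤ 2 * k + 1 by omega)
        gcongr
    _ = _ := by push_cast; ring

lemma tendsto_shell {d : ℕ} (hd : 2 ≤ d) (w : Edim d → ℝ)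
    (hw : ContinuousOn w (closedBall (0 : Edim d) 1)) :
    Filter.Tendsto (fun k : ℕ => ∫ x in closedBall (0 : Edim d) 1,
      4 * ((k : ℝ) + 1) * (‖x‖ ^ 2) ^ k * (1 - (‖x‖ ^ 2) ^ (k + 1)) * w x) Filter.atTop
      (nhds (∫ y : sphere (0 : Edim d) 1, w y ∂(sphMeasure d))) := by
  have : IsFiniteMeasure (sphMeasure d) := by unfold sphMeasure; infer_instance
  set G : ℝ → ℝ := fun r => ∫ y : sphere (0 : Edim d) 1,
    w ((max 0 (min r 1)) • (y : Edim d)) ∂(sphMeasure d) with hG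
  have hGc : Continuous G := by
    have hcont : Continuous (Function.uncurry fun (r : ℝ) (y : sphere (0 : Edim d) 1) =>
        w ((max 0 (min r 1)) • (y : Edim d))) := by
      refine hw.comp_continuous (f := fun z : ℝ × sphere (0 : Edim d) 1 =>
        (max 0 (min z.1 1)) • (z.2 : Edim d)) (by fun_prop) ?_
      rintro ⟨r, y⟩
      have hy : ‖(y : Edim d)‖ = 1 := by simp
      rw [mem_closedBall_zero_iff, norm_smul, hy, mul_one, Real.norm_eq_abs, abs_of_nonneg (le_max_left _ _)]
      exact max_le zero_le_one (min_le_right _ _)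
    have := continuous_parametric_integral_of_continuous (μ := sphMeasure d) hcont isCompact_univ
    simpa using this
  have hG1 : G 1 = ∫ y : sphere (0 : Edim d) 1, w y ∂(sphMeasure d) := by simp [hG]
  have hgc : Continuous (fun r => r ^ (d - 2) * G r) := by fun_prop
  have main := tendsto_setIntegral_peak_smul_of_integrableOn_of_tendsto (μ := (volume : Measure ℝ))
    (s := Set.Ioc (0 : ℝ) 1) (t := Set.Ioc (0 : ℝ) 1) (x₀ := (1 : ℝ)) (l := Filter.atTop)
    (φ := pk) (g := fun r => r ^ (d - 2) * G r) (a := G 1) measurableSet_Ioc measurableSet_Ioc subset_rfl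
    self_mem_nhdsWithin (by simp)
    (Filter.Eventually.of_forall fun k r hr => by
      have hp : r ^ (2 * k + 2) ≤ 1 := pow_le_one₀ hr.1.le hr.2
      have : 0 ≤ 1 - r ^ (2 * k + 2) := by linarith
      have := hr.1.le
      unfold pk; positivity)
    pk_unif (by simp only [pk_int]; exact tendsto_const_nhds)
    (Filter.Eventually.of_forall fun k => by
      have : Continuous (pk k) := by unfold pk; fun_prop
      exact this.aestronglyMeasurable)
    ((hgc.integrableOn_Icc (a := 0) (b := 1)).mono_set Set.Ioc_subset_Icc_self)
    (by
      have := (hgc.tendsto 1).mono_left (nhdsWithin_le_nhds (s := Set.Ioc (0 : ℝ) 1))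
      simpa using this)
  rw [← hG1]
  refine main.congr fun k => ?_
  have hci : ContinuousOn (fun x : Edim d => 4 * ((k : ℝ) + 1) * (‖x‖ ^ 2) ^ k *
      (1 - (‖x‖ ^ 2) ^ (k + 1)) * w x) (closedBall (0 : Edim d) 1) := by fun_prop
  rw [← integral_indicator measurableSet_closedBall, integral_polar hd]
  · rw [setIntegral_congr_fun (g := (Set.Ioc (0 : ℝ) 1).indicator
        fun r => pk k r • (r ^ (d - 2) * G r)) measurableSet_Ioi ?_,
      setIntegral_indicator measurableSet_Ioc]
    · congr 2
      ext r; simp +contextual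
    · intro r hr
      have hr0 : 0 < r := hr
      have hn : ∀ y : sphere (0 : Edim d) 1, ‖r • (y : Edim d)‖ = r := by
        intro y
        have hy : ‖(y : Edim d)‖ = 1 := by simp
        rw [norm_smul, hy, mul_one, Real.norm_eq_abs, abs_of_pos hr0]
      by_cases h1 : r ≤ 1
      · have hm : r ∈ Set.Ioc (0 : ℝ) 1 := ⟨hr0, h1⟩
        have hin : ∀ y : sphere (0 : Edim d) 1, r • (y : Edim d) ∈ closedBall (0 : Edim d) 1 := by
          intro y; rw [mem_closedBall_zero_iff, hn]; exact h1
        have hi : ∀ y : sphere (0 : Edim d) 1, (closedBall (0 : Edim d) 1).indicator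
            (fun x : Edim d => 4 * ((k : ℝ) + 1) * (‖x‖ ^ 2) ^ k *
            (1 - (‖x‖ ^ 2) ^ (k + 1)) * w x) (r • (y : Edim d)) =
            4 * ((k : ℝ) + 1) * (r ^ 2) ^ k * (1 - (r ^ 2) ^ (k + 1)) * w (r • (y : Edim d)) := by
          intro y; rw [Set.indicator_of_mem (hin y), hn]
        simp only [Set.indicator_of_mem hm, hi,
          integral_const_mul, hG, min_eq_left h1, max_eq_right hr0.le, smul_eq_mul, pk]
        have e : r ^ (d - 1) = r ^ (d - 2) * r := by rw [← pow_succ]; congr 1; omega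
        rw [e]; ring
      · have hm : r ∉ Set.Ioc (0 : ℝ) 1 := fun h => h1 h.2
        have hin : ∀ y : sphere (0 : Edim d) 1, r • (y : Edim d) ∉ closedBall (0 : Edim d) 1 := by
          intro y; rw [mem_closedBall_zero_iff, hn]; exact h1
        have hi : ∀ y : sphere (0 : Edim d) 1, (closedBall (0 : Edim d) 1).indicator
            (fun x : Edim d => 4 * ((k : ℝ) + 1) * (‖x‖ ^ 2) ^ k *
            (1 - (‖x‖ ^ 2) ^ (k + 1)) * w x) (r • (y : Edim d)) = 0 := by
          intro y; rw [Set.indicator_of_notMem (hin y)]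
        simp only [Set.indicator_of_notMem hm, hi]
        simp
  · rw [integrable_indicator_iff measurableSet_closedBall]
    exact hci.integrableOn_compact (isCompact_closedBall _ _)

lemma inner_gradient_eq {d : ℕ} (f : Edim d → ℝ) (p : MvPolynomial (Fin d) ℝ) (x : Edim d)
    (hx : x ∈ ball (0 : Edim d) 1) :
    ⟪gradient f x, gradient (pEval p) x⟫ = ∑ i : Fin d,
      fderivWithin ℝ f (closedBall (0 : Edim d) 1) x (EuclideanSpace.single i 1) *
        pEval (pderiv i p) x := by
  have hB : closedBall (0 : Edim d) 1 ∈ nhds x :=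
    Filter.mem_of_superset (isOpen_ball.mem_nhds hx) ball_subset_closedBall
  rw [← (EuclideanSpace.basisFun (Fin d) ℝ).sum_inner_mul_inner]
  refine Finset.sum_congr rfl fun i _ => ?_
  rw [real_inner_comm (gradient (pEval p) x), gradient, gradient,
    InnerProductSpace.toDual_symm_apply, InnerProductSpace.toDual_symm_apply,
    (hasFDerivAt_pEval p x).fderiv, fderivWithin_of_mem_nhds hB, EuclideanSpace.basisFun_apply, dP_single]

lemma cut_identity {d : ℕ} (f : Edim d → ℝ) (hf : ContDiffOn ℝ 1 f (closedBall (0 : Edim d) 1))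
    (p : MvPolynomial (Fin d) ℝ) (k : ℕ) :
    ∫ x in closedBall (0 : Edim d) 1, (1 - (‖x‖ ^ 2) ^ (k + 1)) ^ 2 *
      (f x * pEval (mvLaplacian p) x + ∑ i : Fin d,
      fderivWithin ℝ f (closedBall (0 : Edim d) 1) x (EuclideanSpace.single i 1) *
        pEval (pderiv i p) x) =
    ∫ x in closedBall (0 : Edim d) 1, 4 * ((k : ℝ) + 1) * (‖x‖ ^ 2) ^ k * (1 - (‖x‖ ^ 2) ^ (k + 1)) *
      (f x * pEval (∑ i, X i * pderiv i p) x) := by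
  set B := closedBall (0 : Edim d) 1 with hB
  have hBc : IsCompact B := isCompact_closedBall _ _
  set c : MvPolynomial (Fin d) ℝ := 1 - sumSq d ^ (k + 1) with hc
  have ec : ∀ x : Edim d, pEval c x = 1 - (‖x‖ ^ 2) ^ (k + 1) := by
    intro x; rw [← pEval_sumSq]; simp [hc, pEval]
  have eci : ∀ (x : Edim d) (i : Fin d), pEval (pderiv i c) x =
      -(2 * ((k : ℝ) + 1) * (‖x‖ ^ 2) ^ k * x i) := by
    intro x i
    rw [← pEval_sumSq, hc, map_sub, Derivation.leibniz_pow, pderiv_sumSq]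
    simp [pEval]
    ring
  have cf := hf.continuousOn
  have cF : ∀ i : Fin d, ContinuousOn (fun x => fderivWithin ℝ f B x (EuclideanSpace.single i 1)) B :=
    fun i => (continuousOn_fW f hf).clm_apply continuousOn_const
  have cp : ∀ q : MvPolynomial (Fin d) ℝ, ContinuousOn (pEval q) B :=
    fun q => (continuous_pEval q).continuousOn
  have hi := fun i => ibp c (fun x hx => by rw [ec, hx]; simp) f hf (pderiv i p) i
  have hsum := Finset.sum_congr (s₁ := Finset.univ) rfl fun i _ => hi i
  rw [Finset.sum_neg_distrib, ← integral_finsetSum, ← integral_finsetSum] at hsum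
  · rw [← sub_eq_zero, ← integral_sub]
    · rw [eq_neg_iff_add_eq_zero, ← integral_add] at hsum
      · rw [← hsum]
        refine integral_congr_ae (Filter.Eventually.of_forall fun x => ?_)
        simp only [ec, eci]
        simp only [pEval, mvLaplacian, map_sum, map_mul, eval_X, Finset.mul_sum, mul_add,
          ← Finset.sum_add_distrib, ← Finset.sum_sub_distrib]
        refine Finset.sum_congr rfl fun i _ => ?_
        ring
      · refine ContinuousOn.integrableOn_compact hBc ?_
        refine continuousOn_finsetSum _ fun i _ => ?_
        have := cp c; have := cp (pderiv i (pderiv i p))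
        fun_prop
      · refine ContinuousOn.integrableOn_compact hBc ?_
        refine continuousOn_finsetSum _ fun i _ => ?_
        have := cp c; have := cp (pderiv i p); have := cp (pderiv i c); have := cF i
        fun_prop
    · refine ContinuousOn.integrableOn_compact hBc ?_
      refine ContinuousOn.mul (by fun_prop) ((cf.mul (cp _)).add ?_)
      exact continuousOn_finsetSum _ fun i _ => (cF i).mul (cp _)
    · refine ContinuousOn.integrableOn_compact hBc ?_
      exact ContinuousOn.mul (by fun_prop) (cf.mul (cp _))
  · intro i _
    refine ContinuousOn.integrableOn_compact hBc ?_
    have := cp c; have := cp (pderiv i p); have := cp (pderiv i c); have := cF i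
    fun_prop
  · intro i _
    refine ContinuousOn.integrableOn_compact hBc ?_
    have := cp c; have := cp (pderiv i (pderiv i p))
    fun_prop

lemma ae_ball (d : ℕ) (hd : 2 ≤ d) :
    ∀ᵐ x ∂(volume.restrict (closedBall (0 : Edim d) 1)), x ∈ ball (0 : Edim d) 1 := by
  have : Nonempty (Fin d) := ⟨⟨0, by omega⟩⟩
  have h0 : volume (sphere (0 : Edim d) 1) = 0 := Measure.addHaar_sphere _ _ _
  have h1 : ∀ᵐ x ∂(volume : Measure (Edim d)), x ∉ sphere (0 : Edim d) 1 :=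
    measure_eq_zero_iff_ae_notMem.1 h0
  filter_upwards [ae_restrict_of_ae h1, ae_restrict_mem measurableSet_closedBall] with x hx hx2
  rw [← ball_union_sphere] at hx2
  exact hx2.resolve_right hx

lemma tendsto_cut {d : ℕ} (hd : 2 ≤ d) (h : Edim d → ℝ)
    (c3 : ContinuousOn h (closedBall (0 : Edim d) 1)) :
    Filter.Tendsto (fun k : ℕ => ∫ x in closedBall (0 : Edim d) 1,
      (1 - (‖x‖ ^ 2) ^ (k + 1)) ^ 2 * h x) Filter.atTop
      (nhds (∫ x in closedBall (0 : Edim d) 1, h x)) := by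
  have hae := ae_ball d hd
  refine tendsto_integral_of_dominated_convergence (fun x => ‖h x‖) ?_ ?_ ?_ ?_
  · intro k
    refine ContinuousOn.aestronglyMeasurable ?_ measurableSet_closedBall
    exact ContinuousOn.mul (by fun_prop) c3
  · exact (c3.integrableOn_compact (isCompact_closedBall _ _)).norm
  · intro k
    filter_upwards [hae] with x hx
    have hx1 : ‖x‖ < 1 := by simpa using hx
    have h1 : (‖x‖ ^ 2) ^ (k + 1) ≤ 1 := pow_le_one₀ (by positivity) (pow_le_one₀ (norm_nonneg _) hx1.le)
    have h0 : 0 ≤ (‖x‖ ^ 2) ^ (k + 1) := by positivity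
    rw [norm_mul]
    refine mul_le_of_le_one_left (norm_nonneg _) ?_
    rw [Real.norm_eq_abs, abs_of_nonneg (by positivity)]
    exact pow_le_one₀ (by linarith) (by linarith)
  · filter_upwards [hae] with x hx
    have hx1 : ‖x‖ < 1 := by simpa using hx
    have h2 : ‖x‖ ^ 2 < 1 := pow_lt_one₀ (norm_nonneg _) hx1 (by norm_num)
    have h3 := (tendsto_pow_atTop_nhds_zero_of_lt_one (by positivity) h2).comp
      (Filter.tendsto_add_atTop_nat 1)
    have h4 := ((h3.const_sub 1).pow 2).mul_const (h x)
    simpa using h4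

lemma green_aux {d : ℕ} (hd : 2 ≤ d) (f : Edim d → ℝ) (p : MvPolynomial (Fin d) ℝ) :
    ∫ x in closedBall (0 : Edim d) 1, ⟪gradient f x, gradient (pEval p) x⟫ =
      ∫ x in closedBall (0 : Edim d) 1, ∑ i : Fin d,
      fderivWithin ℝ f (closedBall (0 : Edim d) 1) x (EuclideanSpace.single i 1) *
        pEval (pderiv i p) x := by
  refine integral_congr_ae ?_
  filter_upwards [ae_ball d hd] with x hx
  exact inner_gradient_eq f p x hx

lemma limit_aux {d : ℕ} (hd : 2 ≤ d) (g h w : Edim d → ℝ)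
    (cg : ContinuousOn g (closedBall (0 : Edim d) 1))
    (ch : ContinuousOn h (closedBall (0 : Edim d) 1))
    (cw : ContinuousOn w (closedBall (0 : Edim d) 1))
    (H : ∀ k : ℕ, ∫ x in closedBall (0 : Edim d) 1, (1 - (‖x‖ ^ 2) ^ (k + 1)) ^ 2 * (g x + h x) =
      ∫ x in closedBall (0 : Edim d) 1, 4 * ((k : ℝ) + 1) * (‖x‖ ^ 2) ^ k *
        (1 - (‖x‖ ^ 2) ^ (k + 1)) * w x) :
    ∫ x in closedBall (0 : Edim d) 1, h x =
      (∫ y : sphere (0 : Edim d) 1, w y ∂(sphMeasure d)) - ∫ x in closedBall (0 : Edim d) 1, g x := by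
  have hBc : IsCompact (closedBall (0 : Edim d) 1) := isCompact_closedBall _ _
  have l1 := tendsto_shell hd w cw
  have l2 := tendsto_cut hd (fun x => g x + h x) (cg.add ch)
  simp only [H] at l2
  have h3 := tendsto_nhds_unique l2 l1
  rw [integral_add (cg.integrableOn_compact hBc) (ch.integrableOn_compact hBc)] at h3
  linarith

lemma green {d : ℕ} (hd : 2 ≤ d) (f : Edim d → ℝ)
    (hf : ContDiffOn ℝ 1 f (closedBall (0 : Edim d) 1)) (p : MvPolynomial (Fin d) ℝ) :
    ∫ x in closedBall (0 : Edim d) 1, ⟪gradient f x, gradient (pEval p) x⟫ =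
      (∫ y : sphere (0 : Edim d) 1, f y * pEval (∑ i, X i * pderiv i p) y ∂(sphMeasure d)) -
      ∫ x in closedBall (0 : Edim d) 1, f x * pEval (mvLaplacian p) x := by
  have cf := hf.continuousOn
  have cp : ∀ q : MvPolynomial (Fin d) ℝ, ContinuousOn (pEval q) (closedBall (0 : Edim d) 1) :=
    fun q => (continuous_pEval q).continuousOn
  rw [green_aux hd f p]
  refine limit_aux hd (fun x => f x * pEval (mvLaplacian p) x) _
    (fun x => f x * pEval (∑ i, X i * pderiv i p) x) (cf.mul (cp _)) ?_ (cf.mul (cp _)) ?_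
  · refine continuousOn_finsetSum _ fun i _ => ContinuousOn.mul ?_ (cp _)
    exact (continuousOn_fW f hf).clm_apply continuousOn_const
  · intro k
    exact cut_identity f hf p k

/-- for `f` continuously differentiable on the closed unit ball and `j ≥ 1`,
`⟨f, U_{j,ν}^n⟩_I = -2jλ·(1/ω_d)∫_{S^{d-1}} f Y_ν^{n-2j} dω
+ 4j(n-j+(d-2)/2)·(λ/ω_d)∫_{B^d} f(y) P_{j-1,ν}^{n-2}(W₁;y) dy`. -/
theorem stmt13 (d : ℕ) (hd : 2 ≤ d) (lam : ℝ) (hlam : 0 < lam)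
    (Y : (m : ℕ) → Fin (sigmaDim d m) → MvPolynomial (Fin d) ℝ)
    (hYhom : ∀ m ν, (Y m ν).IsHomogeneous m)
    (hYharm : ∀ m ν, mvLaplacian (Y m ν) = 0)
    (hYon : ∀ (m k : ℕ) (ν : Fin (sigmaDim d m)) (μ : Fin (sigmaDim d k)),
      (1 / omegaD d) * ∫ y : sphere (0 : Edim d) 1,
          pEval (Y m ν) y * pEval (Y k μ) y ∂(sphMeasure d) =
        if m = k ∧ (ν : ℕ) = (μ : ℕ) then 1 else 0)
    (f : Edim d → ℝ) (hf : ContDiffOn ℝ 1 f (closedBall (0 : Edim d) 1))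
    (n j : ℕ) (hn : 2 ≤ n) (hj : 1 ≤ j) (hjn : 2 * j ≤ n)
    (ν : Fin (sigmaDim d (n - 2 * j))) :
    innerI d lam f (pEval (Upoly d Y n j ν)) =
      -2 * (j : ℝ) * lam *
          ((1 / omegaD d) * ∫ y : sphere (0 : Edim d) 1,
            f y * pEval (Y (n - 2 * j) ν) y ∂(sphMeasure d)) +
        4 * (j : ℝ) * ((n : ℝ) - (j : ℝ) + ((d : ℝ) - 2) / 2) *
          ((lam / omegaD d) * ∫ y in closedBall (0 : Edim d) 1,
            f y * (jacobiR (j - 1) 1 ((n : ℝ) - 2 * (j : ℝ) + ((d : ℝ) - 2) / 2)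
                (2 * ‖y‖ ^ 2 - 1) * pEval (Y (n - 2 * j) ν) y)) := by
  have hS : ∀ y : sphere (0 : Edim d) 1, ‖(y : Edim d)‖ = 1 := fun y => by simp
  have h0 : ∀ y : sphere (0 : Edim d) 1, pEval (Upoly d Y n j ν) y = 0 :=
    fun y => pEval_U_sphere d Y n j hj ν _ (hS y)
  have h1 := fun y : sphere (0 : Edim d) 1 => pEval_euler_U d Y hYhom n j hj ν _ (hS y)
  rw [innerI]
  simp only [h0, mul_zero, integral_zero, add_zero]
  rw [green hd f hf]
  simp only [h1, pEval_lap_U d Y hYhom hYharm n j hj hjn ν]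
  simp only [mul_left_comm (f _), integral_const_mul]
  ring
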